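/- Let I be a positive integer, Q : Fin I → ℝ, and let f : (Fin I → ℝ) → ℝ be convex and differentiable. Suppose q* satisfies q* i ≤ Q i for all i, and q* is coordinatewise minimal over the box: for every coordinate i and every x ≤ Q i, f(q*) ≤ f(update of q* at coordinate i to x). Then q* is a global minimizer of f over the box, i.e., f(q*) ≤ f(q) for every q with q i ≤ Q i for all i. -/

import Mathlib

/-!
Write `f'` for the derivative of `f` at `qstar`. Along the segment from `qstar` to the point
obtained by replacing one coordinate with `q i`, `f` is minimal at `qstar`, so the directional
derivative `f' (Pi.single i (q i - qstar i))` is nonnegative. Since the box is a product, every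
feasible direction `q - qstar` is the sum of these one-coordinate feasible directions, and linearity
of `f'` gives `0 ≤ f' (q - qstar)`. Convexity turns this first-order condition into
global minimality through the gradient inequality `f qstar + f' (q - qstar) ≤ f q`.
-/

/-- The gradient inequality: a convex function lies above its tangent at any point of
differentiability. -/
lemma ConvexOn.add_hasFDerivAt_le {E : Type*} [NormedAddCommGroup E] [NormedSpace ℝ E]
    {f : E → ℝ} (hconv : ConvexOn ℝ Set.univ f) {f' : E →L[ℝ] ℝ} {x : E}
    (hf : HasFDerivAt f f' x) (y : E) : f x + f' (y - x) ≤ f y := by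
  have hg : ConvexOn ℝ Set.univ (f ∘ AffineMap.lineMap (k := ℝ) x y) := by
    simpa using hconv.comp_affineMap (AffineMap.lineMap x y)
  have hd : HasDerivAt (f ∘ AffineMap.lineMap (k := ℝ) x y) (f' (y - x)) 0 := by
    refine HasFDerivAt.comp_hasDerivAt (0 : ℝ) ?_ AffineMap.hasDerivAt_lineMap
    simpa using hf
  have h := hg.le_slope_of_hasDerivAt (Set.mem_univ 0) (Set.mem_univ 1) one_pos hd
  simp only [slope_def_field, Function.comp_apply, AffineMap.lineMap_apply_one,
    AffineMap.lineMap_apply_zero, sub_zero, div_one] at h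
  linarith

/-- For a convex differentiable function over the box `{q | ∀ i, q i ≤ Q i}`,
a feasible point that is coordinatewise minimal (no single coordinate can be
changed within its bound to decrease `f`) is a global minimizer over the box. -/
theorem coordinatewise_minimal_implies_global_min
    (I : ℕ) (hI : 0 < I) (Q : Fin I → ℝ) (f : (Fin I → ℝ) → ℝ)
    (hconv : ConvexOn ℝ Set.univ f) (hdiff : Differentiable ℝ f)
    (qstar : Fin I → ℝ)
    (hfeas : ∀ i, qstar i ≤ Q i)
    (hcoord : ∀ i : Fin I, ∀ x : ℝ, x ≤ Q i →
      f qstar ≤ f (Function.update qstar i x)) :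
    ∀ q : Fin I → ℝ, (∀ i, q i ≤ Q i) → f qstar ≤ f q := by
  intro q hq
  have hf := (hdiff qstar).hasFDerivAt
  have hpartial : ∀ i, 0 ≤ fderiv ℝ f qstar (Pi.single i (q i - qstar i)) := by
    intro i
    have hmin : IsMinOn f {p | f qstar ≤ f p} qstar := fun p hp => hp
    refine hmin.localize.hasFDerivWithinAt_nonneg hf.hasFDerivWithinAt
      (mem_posTangentConeAt_of_segment_subset ?_)
    rw [segment_eq_image']
    rintro _ ⟨t, ⟨ht0, ht1⟩, rfl⟩
    have hupd : qstar + t • (qstar + Pi.single i (q i - qstar i) - qstar) =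
        Function.update qstar i (qstar i + t * (q i - qstar i)) := by
      ext j
      by_cases hj : j = i
      · subst hj; simp
      · simp [hj]
    simp only [Set.mem_ofPred_eq, hupd]
    apply hcoord
    nlinarith [hq i, hfeas i]
  have hnonneg : 0 ≤ fderiv ℝ f qstar (q - qstar) := by
    rw [← Finset.univ_sum_single (q - qstar), map_sum]
    exact Finset.sum_nonneg fun i _ => hpartial i
  linarith [hconv.add_hasFDerivAt_le hf q]
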